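/- Let T be the star on eight vertices (one center joined to seven leaves). Let F_△ be the triangle, F_CC the graph consisting of two disjoint copies of T plus an edge joining their centers, F_CL the graph consisting of two disjoint copies of T plus an edge joining the center of one copy to a leaf of the other, and F_LL the graph consisting of two disjoint copies of T plus an edge joining a leaf of one copy to a leaf of the other. Let F be the disjoint union F_△ ∪ F_CC ∪ F_CL ∪ F_LL. Then: (i) every graph T+e obtained by adding an edge between two non-adjacent vertices of T, and every graph 2T+e obtained from two disjoint copies of T by adding an edge with one endpoint in each copy, contains a connected component of F that is not contained in T; and (ii) if H is a disjoint union of complete graphs and (H,T) is an F-saturated blueprint, then |V(H)| is not congruent to 7 modulo 8. -/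

import Mathlib

open SimpleGraph Filter Topology

/-- `H` (on `β`) is contained in `G` (on `α`): `G` has a subgraph isomorphic to `H`. -/
def Contains {α β : Type*} (G : SimpleGraph α) (H : SimpleGraph β) : Prop :=
  ∃ f : β ↪ α, ∀ a b : β, H.Adj a b → G.Adj (f a) (f b)

/-- `G` is `F`-saturated: `G` does not contain `F`, but adding any missing edge creates `F`. -/
def SatSingle {γ α : Type*} (F : SimpleGraph γ) (G : SimpleGraph α) : Prop :=
  (¬ Contains G F) ∧
    ∀ u v : α, u ≠ v → ¬ G.Adj u v → Contains (G ⊔ SimpleGraph.fromEdgeSet {s(u, v)}) F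

/-- The disjoint union of two graphs. -/
def disjUnionG {α β : Type*} (G : SimpleGraph α) (H : SimpleGraph β) : SimpleGraph (α ⊕ β) :=
  SimpleGraph.fromRel (fun x y =>
    match x, y with
    | Sum.inl a, Sum.inl b => G.Adj a b
    | Sum.inr a, Sum.inr b => H.Adj a b
    | _, _ => False)

/-- `H ∪ kT`: the disjoint union of `H` with `k` copies of `T`. -/
def unionCopies {α β : Type*} (H : SimpleGraph α) (k : ℕ) (T : SimpleGraph β) :
    SimpleGraph (α ⊕ Fin k × β) :=
  SimpleGraph.fromRel (fun x y =>
    match x, y with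
    | Sum.inl a, Sum.inl b => H.Adj a b
    | Sum.inr (i, a), Sum.inr (j, b) => i = j ∧ T.Adj a b
    | _, _ => False)

/-- `T` is a tree such that every graph `T+e` (obtained by adding an edge between two
non-adjacent vertices of `T`) and every graph `2T+e` (obtained from the disjoint union of two
copies of `T` by adding an edge with one endpoint in each copy) contains a connected component of
`F` that is not contained in `T`. -/
def GoodTree {nF : ℕ} (F : SimpleGraph (Fin nF)) (t : ℕ) (T : SimpleGraph (Fin t)) : Prop :=
  T.IsTree ∧
  (∀ u v : Fin t, u ≠ v → ¬ T.Adj u v →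
    ∃ c : F.ConnectedComponent, ¬ Contains T (SimpleGraph.induce c.supp F) ∧
      Contains (T ⊔ SimpleGraph.fromEdgeSet {s(u, v)}) (SimpleGraph.induce c.supp F)) ∧
  (∀ u v : Fin t,
    ∃ c : F.ConnectedComponent, ¬ Contains T (SimpleGraph.induce c.supp F) ∧
      Contains (disjUnionG T T ⊔ SimpleGraph.fromEdgeSet {s(Sum.inl u, Sum.inr v)})
        (SimpleGraph.induce c.supp F))

/-- The star on eight vertices: centre `0` joined to seven leaves. -/
def starT : SimpleGraph (Fin 8) := SimpleGraph.fromRel (fun x _ => x = 0)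

/-- The triangle. -/
def Ftri : SimpleGraph (Fin 3) := ⊤

/-- Two disjoint copies of the star plus an edge joining their centres. -/
def FCC : SimpleGraph (Fin 8 ⊕ Fin 8) :=
  disjUnionG starT starT ⊔
    SimpleGraph.fromEdgeSet {s((Sum.inl 0 : Fin 8 ⊕ Fin 8), (Sum.inr 0 : Fin 8 ⊕ Fin 8))}

/-- Two disjoint copies of the star plus an edge joining the centre of one to a leaf of the
other. -/
def FCL : SimpleGraph (Fin 8 ⊕ Fin 8) :=
  disjUnionG starT starT ⊔
    SimpleGraph.fromEdgeSet {s((Sum.inl 0 : Fin 8 ⊕ Fin 8), (Sum.inr 1 : Fin 8 ⊕ Fin 8))}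

/-- Two disjoint copies of the star plus an edge joining a leaf of one to a leaf of the other. -/
def FLL : SimpleGraph (Fin 8 ⊕ Fin 8) :=
  disjUnionG starT starT ⊔
    SimpleGraph.fromEdgeSet {s((Sum.inl 1 : Fin 8 ⊕ Fin 8), (Sum.inr 1 : Fin 8 ⊕ Fin 8))}

/-- The graph `F = F_△ ∪ F_CC ∪ F_CL ∪ F_LL`. -/
def bigF : SimpleGraph ((Fin 3 ⊕ (Fin 8 ⊕ Fin 8)) ⊕ ((Fin 8 ⊕ Fin 8) ⊕ (Fin 8 ⊕ Fin 8))) :=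
  disjUnionG (disjUnionG Ftri FCC) (disjUnionG FCL FLL)

/-!
Write `F = K₃ ⊕ D`, where `D` consists of three connected graphs on sixteen vertices. In a saturated
blueprint `(H, T)`, joining two leaves of one star creates no component with more than eight
vertices outside `H`, so `D` embeds in `H`; fix a copy. Off this copy each clique of `H` has at most
two vertices, since otherwise `H` would contain `K₃ ⊕ D`. Moreover each clique of `H` meets the
copy: a clique that does not has at most two vertices, and joining it to a star yields a component
with at most ten vertices in which the new edge is a bridge, so this edge lies in no copy of `F`.
Hence `H` has at most three cliques and `48 ≤ |V(H)| ≤ 48 + 2 * 3`, which excludes `47` and `55`.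
-/

section Containment

variable {α β γ δ : Type*} {A : SimpleGraph α} {B : SimpleGraph β} {G : SimpleGraph γ}
  {G' : SimpleGraph δ}

lemma contains_iff_isContained : Contains G A ↔ A ⊑ G :=
  ⟨fun ⟨f, hf⟩ => ⟨⟨⟨f, hf _ _⟩, f.injective⟩⟩,
    fun ⟨f⟩ => ⟨f.toEmbedding, fun _ _ => f.toHom.map_adj⟩⟩

lemma free_of_card_lt [Fintype α] [Fintype γ] (h : Fintype.card γ < Fintype.card α) : A.Free G :=
  fun ⟨f⟩ => (Fintype.card_le_of_injective f f.injective).not_gt h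

lemma SatSingle.congr (e : A ≃g B) (h : SatSingle A G) : SatSingle B G := by
  simpa only [SatSingle, contains_iff_isContained, isContained_congr_left e] using h

lemma sup_edge_isContained (f : Copy G G') (u v : γ) : G ⊔ edge u v ⊑ G' ⊔ edge (f u) (f v) := by
  refine ⟨⟨f, fun {a b} h => ?_⟩, f.injective⟩
  obtain h | h := h
  · exact Or.inl (f.toHom.map_adj h)
  · rw [edge_adj] at h
    right
    rw [edge_adj]
    exact ⟨h.1.imp (And.imp (congrArg f) (congrArg f)) (And.imp (congrArg f) (congrArg f)),
      f.injective.ne h.2⟩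

lemma isContained_of_copy_sup_edge {u v : γ} (f : Copy A (G ⊔ edge u v))
    (hf : ∀ a b, A.Adj a b → ¬(f a = u ∧ f b = v)) : A ⊑ G := by
  refine ⟨⟨f, fun {a b} hab => ?_⟩, f.injective⟩
  obtain h | h := f.toHom.map_adj hab
  · exact h
  · obtain ⟨h | h, -⟩ := (edge_adj ..).mp h
    · exact absurd h (hf a b hab)
    · exact absurd h.symm (hf b a hab.symm)

lemma sum_isContained_of_disjoint_range (f : Copy A G) (g : Copy B G)
    (hfg : Disjoint (Set.range f) (Set.range g)) : A ⊕g B ⊑ G := by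
  refine ⟨⟨Sum.elim f g, ?_⟩, f.injective.sumElim g.injective fun a b =>
    Set.disjoint_iff_forall_ne.mp hfg ⟨a, rfl⟩ ⟨b, rfl⟩⟩
  rintro (a | a) (b | b) h
  · exact f.toHom.map_adj (sum_adj_inl.mp h)
  · simp at h
  · simp at h
  · exact g.toHom.map_adj (sum_adj_inr.mp h)

lemma top_sum_isContained_of_isClique {n : ℕ} {s : Set γ} (hs : G.IsClique s) (hn : n ≤ s.encard)
    (f : Copy A G) (hf : Disjoint s (Set.range f)) : (⊤ : SimpleGraph (Fin n)) ⊕g A ⊑ G := by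
  obtain ⟨t, hts, ht⟩ := Set.exists_subset_encard_eq hn
  have : Finite t := Set.finite_of_encard_eq_coe ht
  have hcard : Nat.card t = n := by rw [Nat.card_coe_set_eq, Set.ncard, ht, ENat.toNat_natCast]
  let e : Fin n ≃ t := (Finite.equivFinOfCardEq hcard).symm
  refine sum_isContained_of_disjoint_range ⟨⟨fun i => (e i : γ), fun {i j} hij => ?_⟩,
    Subtype.val_injective.comp e.injective⟩ f (hf.mono_left ?_)
  · exact hs (hts (e i).2) (hts (e j).2) fun h => hij (e.injective (Subtype.ext h))
  · rintro _ ⟨i, rfl⟩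
    exact hts (e i).2

lemma not_map_edge_of_commonNeighbors_eq_empty {n : ℕ} (hn : 2 < n) {u v : γ}
    (huv : G.commonNeighbors u v = ∅) (f : Copy (⊤ : SimpleGraph (Fin n)) (G ⊔ edge u v))
    (i j : Fin n) : ¬(f i = u ∧ f j = v) := by
  rintro ⟨hi, hj⟩
  obtain ⟨k, -, hk⟩ : ∃ k ∈ Finset.univ, k ∉ ({i, j} : Finset (Fin n)) :=
    Finset.exists_mem_notMem_of_card_lt_card (by simpa using Finset.card_le_two.trans_lt hn)
  have hki : i ≠ k := fun h => hk (by simp [h])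
  have hkj : j ≠ k := fun h => hk (by simp [h])
  have hku : f k ≠ u := (f.injective.ne hki.symm).trans_eq hi
  have hkv : f k ≠ v := (f.injective.ne hkj.symm).trans_eq hj
  have huk : (G ⊔ edge u v).Adj (f i) (f k) := f.toHom.map_adj hki
  have hvk : (G ⊔ edge u v).Adj (f j) (f k) := f.toHom.map_adj hkj
  simp only [hi, hj, sup_adj, edge_adj, hku, hkv, and_false, false_and, or_false] at huk hvk
  exact huv.subset (⟨huk, hvk⟩ : f k ∈ G.commonNeighbors u v)

end Containment

section Components

variable {α β γ δ : Type*} {A : SimpleGraph α} {B : SimpleGraph β} {G : SimpleGraph γ}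
  {D : SimpleGraph δ}

lemma mem_of_reachable {s : Set γ} (hs : ∀ a b, G.Adj a b → a ∈ s → b ∈ s) {a b : γ}
    (hab : G.Reachable a b) (ha : a ∈ s) : b ∈ s := by
  obtain ⟨p⟩ := hab
  induction p with
  | nil => exact ha
  | cons h _ ih => exact ih (hs _ _ h ha)

lemma encard_supp_le_of_mem {s : Set γ} (hs : ∀ a b, G.Adj a b → a ∈ s → b ∈ s) (f : Copy D G)
    {d : δ} (hd : f d ∈ s) : (D.connectedComponentMk d).supp.encard ≤ s.encard := by
  rw [← f.injective.encard_image]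
  refine Set.encard_le_encard ?_
  rintro _ ⟨d', hd', rfl⟩
  exact mem_of_reachable hs ((ConnectedComponent.exact hd').symm.map f.toHom) hd

lemma encard_supp_le_of_copy (f : Copy D G) (d : δ) :
    (D.connectedComponentMk d).supp.encard ≤ (G.connectedComponentMk (f d)).supp.encard :=
  encard_supp_le_of_mem (fun _ _ h ha => ConnectedComponent.mem_supp_of_adj_mem_supp _ ha h) f rfl

lemma le_encard_supp_sum {n : ℕ∞} (hA : ∀ c : A.ConnectedComponent, n ≤ c.supp.encard)
    (hB : ∀ c : B.ConnectedComponent, n ≤ c.supp.encard) (c : (A ⊕g B).ConnectedComponent) :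
    n ≤ c.supp.encard := by
  induction c using ConnectedComponent.ind with
  | h x =>
    obtain a | b := x
    · exact (hA _).trans (encard_supp_le_of_copy Embedding.sumInl.toCopy a)
    · exact (hB _).trans (encard_supp_le_of_copy Embedding.sumInr.toCopy b)

lemma card_connectedComponent_sum_le : ENat.card (A ⊕g B).ConnectedComponent ≤
    ENat.card A.ConnectedComponent + ENat.card B.ConnectedComponent := by
  let f : A.ConnectedComponent ⊕ B.ConnectedComponent → (A ⊕g B).ConnectedComponent :=
    Sum.elim (.map Embedding.sumInl.toHom) (.map Embedding.sumInr.toHom)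
  have hf : f.Surjective := by
    refine ConnectedComponent.ind ?_
    rintro (a | b)
    · exact ⟨.inl (A.connectedComponentMk a), rfl⟩
    · exact ⟨.inr (B.connectedComponentMk b), rfl⟩
  rw [← ENat.card_sum]
  exact ENat.card_le_card_of_injective (Function.injective_surjInv hf)

lemma card_connectedComponent_le_one (hG : G.Preconnected) : ENat.card G.ConnectedComponent ≤ 1 :=
  have := hG.subsingleton_connectedComponent
  ENat.card_le_one

lemma supp_eq_univ_of_preconnected (hG : G.Preconnected) (c : G.ConnectedComponent) :
    c.supp = Set.univ :=
  have := hG.subsingleton_connectedComponent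
  Set.eq_univ_of_forall fun _ => Subsingleton.elim _ _

lemma card_le_of_encard_supp_diff_le [Finite G.ConnectedComponent] {n : ℕ∞} (s : Set γ)
    (hs : ∀ c : G.ConnectedComponent, (c.supp \ s).encard ≤ n) :
    ENat.card γ ≤ s.encard + ENat.card G.ConnectedComponent * n := by
  have := Fintype.ofFinite G.ConnectedComponent
  calc
    ENat.card γ = (s ∪ ⋃ c : G.ConnectedComponent, c.supp \ s).encard := by
      rw [← Set.iUnion_sdiff, iUnion_connectedComponentSupp, Set.union_sdiff_self, Set.union_univ,
        Set.encard_univ]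
    _ ≤ s.encard + ∑ c : G.ConnectedComponent, (c.supp \ s).encard := by
      grw [Set.encard_union_le, Set.encard_iUnion_le_of_fintype]
    _ ≤ s.encard + ENat.card G.ConnectedComponent * n := by
      grw [Finset.sum_le_card_nsmul _ _ n fun c _ => hs c]
      simp

lemma top_sum_isContained_of_isContained_sup_edge {n : ℕ} (hn : 2 < n) {u v : γ}
    (huv : G.commonNeighbors u v = ∅)
    (hD : ∀ c : D.ConnectedComponent, (G.connectedComponentMk u).supp.encard +
      (G.connectedComponentMk v).supp.encard < c.supp.encard)
    (h : (⊤ : SimpleGraph (Fin n)) ⊕g D ⊑ G ⊔ edge u v) :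
    (⊤ : SimpleGraph (Fin n)) ⊕g D ⊑ G := by
  obtain ⟨f⟩ := h
  let S := (G.connectedComponentMk u).supp ∪ (G.connectedComponentMk v).supp
  have hS : ∀ a b, (G ⊔ edge u v).Adj a b → a ∈ S → b ∈ S := by
    rintro a b (hab | hab) ha
    · exact ha.imp (ConnectedComponent.mem_supp_of_adj_mem_supp _ · hab)
        (ConnectedComponent.mem_supp_of_adj_mem_supp _ · hab)
    · obtain ⟨⟨-, rfl⟩ | ⟨-, rfl⟩, -⟩ := (edge_adj ..).mp hab
      · exact Or.inr rfl
      · exact Or.inl rfl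
  have hfS (d : δ) : f (.inr d) ∉ S := fun hd =>
    ((hD _).trans_le (encard_supp_le_of_mem hS (f.comp Embedding.sumInr.toCopy) hd)).not_ge
      (Set.encard_union_le _ _)
  refine isContained_of_copy_sup_edge f ?_
  rintro (a | a) (b | b) hab ⟨ha, hb⟩
  · exact not_map_edge_of_commonNeighbors_eq_empty hn huv (f.comp Embedding.sumInl.toCopy) a b
      ⟨ha, hb⟩
  · simp at hab
  · simp at hab
  · exact hfS a (Or.inl (congrArg G.connectedComponentMk ha))

/-- `A` is isomorphic to a connected component of `G`; this frees containment in a component of a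
disjoint union from the subtype of vertices on which `SimpleGraph.induce` lives. -/
def IsComponent (A : SimpleGraph α) (G : SimpleGraph γ) : Prop :=
  ∃ c : G.ConnectedComponent, Nonempty (A ≃g G.induce c.supp)

lemma isComponent_self (hG : G.Connected) : IsComponent G G :=
  have ⟨v⟩ := hG.nonempty
  ⟨G.connectedComponentMk v, by
    rw [supp_eq_univ_of_preconnected hG.preconnected]
    exact ⟨(induceUnivIso G).symm⟩⟩

lemma IsComponent.map (h : IsComponent A G) (e : G ↪g D)
    (he : ∀ x y, D.Adj x y → x ∈ Set.range e → y ∈ Set.range e) : IsComponent A D := by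
  obtain ⟨c, ⟨σ⟩⟩ := h
  let f : A ↪g D := e.comp ((Embedding.induce c.supp).comp σ.toEmbedding)
  have hf : Set.range f = (c.map e.toHom).supp := by
    refine Set.Subset.antisymm ?_ fun y hy => ?_
    · rintro _ ⟨a, rfl⟩
      exact congrArg (ConnectedComponent.map e.toHom) (σ a).2
    · induction c using ConnectedComponent.ind with
      | h x =>
        have hclosed : ∀ y z, D.Adj y z → y ∈ Set.range f → z ∈ Set.range f := by
          rintro _ z hyz ⟨a, rfl⟩
          obtain ⟨w, rfl⟩ := he _ z hyz ⟨_, rfl⟩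
          have hw : w ∈ (G.connectedComponentMk x).supp :=
            ConnectedComponent.mem_supp_of_adj_mem_supp _ (σ a).2 (e.map_adj_iff.mp hyz)
          exact ⟨σ.symm ⟨w, hw⟩, congrArg (e ∘ Subtype.val) (σ.apply_symm_apply _)⟩
        exact mem_of_reachable hclosed (ConnectedComponent.exact hy).symm
          ⟨σ.symm ⟨x, rfl⟩, congrArg (e ∘ Subtype.val) (σ.apply_symm_apply _)⟩
  exact ⟨c.map e.toHom, hf ▸ ⟨f.isoInduceRange⟩⟩

lemma IsComponent.sum_inl (h : IsComponent A G) : IsComponent A (G ⊕g B) := by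
  refine h.map Embedding.sumInl ?_
  rintro _ (y | y) hxy ⟨x, rfl⟩
  · exact ⟨y, rfl⟩
  · simp at hxy

lemma IsComponent.sum_inr (h : IsComponent A G) : IsComponent A (B ⊕g G) := by
  refine h.map Embedding.sumInr ?_
  rintro _ (y | y) hxy ⟨x, rfl⟩
  · simp at hxy
  · exact ⟨y, rfl⟩

lemma IsComponent.exists_contains {T : SimpleGraph β} {G' : SimpleGraph δ} (h : IsComponent A G)
    (hT : A.Free T) (hG' : A ⊑ G') : ∃ c : G.ConnectedComponent,
      ¬Contains T (G.induce c.supp) ∧ Contains G' (G.induce c.supp) := by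
  obtain ⟨c, ⟨σ⟩⟩ := h
  simp only [contains_iff_isContained]
  exact ⟨c, (free_congr_left σ).mp hT, (isContained_congr_left σ).mp hG'⟩

end Components

section Blueprint

variable {α β δ κ : Type*} {H : SimpleGraph α} {D : SimpleGraph δ} {T : SimpleGraph β}

lemma disjUnionG_eq_sum (G : SimpleGraph α) (H : SimpleGraph β) : disjUnionG G H = G ⊕g H := by
  ext (a | a) (b | b)
  · simpa [disjUnionG, adj_comm] using Adj.ne
  · simp [disjUnionG]
  · simp [disjUnionG]
  · simpa [disjUnionG, adj_comm] using Adj.ne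

lemma unionCopies_eq_sum (H : SimpleGraph α) (k : ℕ) (T : SimpleGraph β) :
    unionCopies H k T = H ⊕g ((⊥ : SimpleGraph (Fin k)) □ T) := by
  ext (a | ⟨i, a⟩) (b | ⟨j, b⟩)
  · simpa [unionCopies, adj_comm] using Adj.ne
  · simp [unionCopies]
  · simp [unionCopies]
  · simp only [unionCopies, fromRel_adj, sum_adj_inr, boxProd_adj, bot_adj, false_and, false_or]
    have hne (h : T.Adj a b) : a ≠ b := h.ne
    grind [T.adj_comm]

lemma encard_supp_sum_inl_le (v : α) :
    ((H ⊕g T).connectedComponentMk (.inl v)).supp.encard ≤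
      (H.connectedComponentMk v).supp.encard := by
  refine le_trans ?_ (Set.encard_image_le (Sum.inl (β := β)) _)
  refine encard_supp_le_of_mem ?_ (Copy.id _) (Set.mem_image_of_mem _ rfl)
  rintro _ (b | b) hab ⟨a, ha, rfl⟩
  · exact ⟨b, ConnectedComponent.mem_supp_of_adj_mem_supp _ ha (sum_adj_inl.mp hab), rfl⟩
  · simp at hab

lemma encard_supp_sum_boxProd_inr_le (i : κ) (x : β) :
    ((H ⊕g ((⊥ : SimpleGraph κ) □ T)).connectedComponentMk (.inr (i, x))).supp.encard ≤
      ENat.card β := by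
  rw [← Set.encard_univ]
  refine le_trans ?_ (Set.encard_image_le (fun b => Sum.inr (α := α) (i, b)) _)
  refine encard_supp_le_of_mem ?_ (Copy.id _) (Set.mem_image_of_mem _ (Set.mem_univ x))
  rintro _ (b | ⟨j, b⟩) hab ⟨a, -, rfl⟩
  · simp at hab
  · obtain ⟨h, -⟩ | ⟨-, rfl⟩ := boxProd_adj.mp (sum_adj_inr.mp hab)
    · exact h.elim
    · exact Set.mem_image_of_mem _ (Set.mem_univ b)

lemma isContained_of_isContained_sum_boxProd
    (hD : ∀ c : D.ConnectedComponent, ENat.card β < c.supp.encard)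
    (h : D ⊑ H ⊕g ((⊥ : SimpleGraph κ) □ T)) : D ⊑ H := by
  obtain ⟨f⟩ := h
  have hinl : ∀ d, ∃ a, Sum.inl a = f d := by
    intro d
    rcases hfd : f d with a | ⟨i, b⟩
    · exact ⟨a, rfl⟩
    · have hle := encard_supp_le_of_copy f d
      rw [hfd] at hle
      exact absurd (hD _) (hle.trans (encard_supp_sum_boxProd_inr_le i b)).not_gt
  choose g hg using hinl
  refine ⟨⟨g, fun {d d'} h => ?_⟩, fun d d' (h : g d = g d') =>
    f.injective (show f d = f d' by rw [← hg, ← hg, h])⟩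
  have hadj : (H ⊕g ((⊥ : SimpleGraph κ) □ T)).Adj (f d) (f d') := f.toHom.map_adj h
  rwa [← hg, ← hg, sum_adj_inl] at hadj

lemma isContained_of_isContained_sum_boxProd_sup_edge
    (hD : ∀ c : D.ConnectedComponent, ENat.card β < c.supp.encard) {i : κ} {u v : β}
    (h : D ⊑ (H ⊕g ((⊥ : SimpleGraph κ) □ T)) ⊔ edge (.inr (i, u)) (.inr (i, v))) : D ⊑ H := by
  refine isContained_of_isContained_sum_boxProd (T := ⊤) (κ := κ) hD
    (h.mono_right (sup_le ?_ fun x y hxy => ?_))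
  · rintro (a | ⟨j, a⟩) (b | ⟨j', b⟩) hab
    · exact hab
    · simp at hab
    · simp at hab
    · rw [sum_adj_inr, boxProd_adj] at hab ⊢
      exact hab.imp_right (And.imp_left Adj.ne)
  · obtain ⟨⟨rfl, rfl⟩ | ⟨rfl, rfl⟩, hne⟩ := (edge_adj ..).mp hxy <;>
      simpa [boxProd_adj] using hne

section Saturated

variable {r : ℕ}

lemma encard_supp_diff_range_le (hH : ∀ u v, H.Reachable u v → u ≠ v → H.Adj u v)
    (hfree : ((⊤ : SimpleGraph (Fin (r + 1))) ⊕g D).Free H) (f : Copy D H)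
    (c : H.ConnectedComponent) : (c.supp \ Set.range f).encard ≤ r := by
  by_contra! hlt
  refine hfree (top_sum_isContained_of_isClique (s := c.supp \ Set.range f) ?_ ?_ f
    Set.disjoint_sdiff_left)
  · exact fun u hu v hv => hH u v (ConnectedComponent.exact (hu.1.trans hv.1.symm))
  · simpa using Order.add_one_le_of_lt hlt

lemma surjective_map_of_satSingle (hr : 2 ≤ r)
    (hD : ∀ c : D.ConnectedComponent, r + ENat.card β < c.supp.encard)
    (hH : ∀ u v, H.Reachable u v → u ≠ v → H.Adj u v) [Nonempty β] [Nonempty κ]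
    (hsat : SatSingle ((⊤ : SimpleGraph (Fin (r + 1))) ⊕g D) (H ⊕g ((⊥ : SimpleGraph κ) □ T)))
    (f : Copy D H) : (ConnectedComponent.map f.toHom).Surjective := by
  simp only [SatSingle, contains_iff_isContained] at hsat
  obtain ⟨hfree, hedge⟩ := hsat
  refine ConnectedComponent.ind fun v => ?_
  by_contra! hv
  have hdisj : Disjoint (H.connectedComponentMk v).supp (Set.range f) := by
    rw [Set.disjoint_right]
    rintro _ ⟨d, rfl⟩ hd
    exact hv (D.connectedComponentMk d) hd
  have hcard : (H.connectedComponentMk v).supp.encard ≤ r := by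
    rw [← hdisj.sdiff_eq_left]
    exact encard_supp_diff_range_le hH (fun h => hfree (h.trans Embedding.sumInl.isContained)) f _
  obtain ⟨i⟩ := ‹Nonempty κ›
  obtain ⟨x⟩ := ‹Nonempty β›
  refine hfree (top_sum_isContained_of_isContained_sup_edge (by lia) ?_ (fun c => ?_)
    (hedge (.inl v) (.inr (i, x)) (by simp) (by simp)))
  · ext (a | a) <;> simp [mem_commonNeighbors]
  · grw [encard_supp_sum_inl_le, encard_supp_sum_boxProd_inr_le, hcard]
    exact hD c

theorem card_mem_Icc_of_satSingle [Finite D.ConnectedComponent] [Nonempty κ] (hr : 2 ≤ r)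
    (hD : ∀ c : D.ConnectedComponent, r + ENat.card β < c.supp.encard)
    (hH : ∀ u v, H.Reachable u v → u ≠ v → H.Adj u v) (hT : T ≠ ⊤)
    (hsat : SatSingle ((⊤ : SimpleGraph (Fin (r + 1))) ⊕g D) (H ⊕g ((⊥ : SimpleGraph κ) □ T))) :
    ENat.card α ∈ Set.Icc (ENat.card δ) (ENat.card δ + ENat.card D.ConnectedComponent * r) := by
  obtain ⟨u, v, huv, hnadj⟩ := ne_top_iff_exists_not_adj.mp hT
  have : Nonempty β := ⟨u⟩
  obtain ⟨i⟩ := ‹Nonempty κ›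
  obtain ⟨f⟩ : D ⊑ H := by
    have hcopy := contains_iff_isContained.mp
      (hsat.2 (.inr (i, u)) (.inr (i, v)) (by simpa using huv) (by simpa using hnadj))
    exact isContained_of_isContained_sum_boxProd_sup_edge
      (fun c => le_add_self.trans_lt (hD c)) (Embedding.sumInr.isContained.trans hcopy)
  have hsurj := surjective_map_of_satSingle hr hD hH hsat f
  have : Finite H.ConnectedComponent := .of_surjective _ hsurj
  have hfree : ((⊤ : SimpleGraph (Fin (r + 1))) ⊕g D).Free H := fun h =>
    hsat.1 (contains_iff_isContained.mpr (h.trans Embedding.sumInl.isContained))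
  refine ⟨ENat.card_le_card_of_injective f.injective, ?_⟩
  calc
    ENat.card α ≤ (Set.range f).encard + ENat.card H.ConnectedComponent * r :=
      card_le_of_encard_supp_diff_le _ (encard_supp_diff_range_le hH hfree f)
    _ ≤ ENat.card δ + ENat.card D.ConnectedComponent * r := by
      grw [ENat.card_le_card_of_injective (Function.injective_surjInv hsurj)]
      rw [← Set.image_univ]
      grw [Set.encard_image_le, Set.encard_univ]

end Saturated

end Blueprint

section Star

variable {V : Type*} {r u v : V}

lemma top_isContained_starGraph_sup_edge (huv : u ≠ v) (hadj : ¬(starGraph r).Adj u v) :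
    (⊤ : SimpleGraph (Fin 3)) ⊑ starGraph r ⊔ edge u v := by
  classical
  obtain ⟨hu, hv⟩ : u ≠ r ∧ v ≠ r := by
    rw [starGraph_adj] at hadj
    tauto
  refine (not_cliqueFree_iff_top_isContained 3).mp fun h => h {r, u, v} ?_
  rw [is3Clique_triple_iff]
  exact ⟨Or.inl (starGraph_center_adj hu.symm), Or.inl (starGraph_center_adj hv.symm),
    Or.inr (by simp [edge_adj, huv])⟩

lemma exists_iso_starGraph_apply_eq {l : V} (hl : l ≠ r) (u : V) :
    ∃ σ : starGraph r ≃g starGraph r, σ r = u ∨ σ l = u := by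
  classical
  by_cases hu : u = r
  · exact ⟨Iso.refl, Or.inl hu.symm⟩
  · have hr (x : V) : Equiv.swap l u x = r ↔ x = r := by
      rw [← Equiv.eq_symm_apply, Equiv.symm_swap, Equiv.swap_apply_of_ne_of_ne hl.symm (Ne.symm hu)]
    exact ⟨⟨Equiv.swap l u, by simp [hr]⟩, Or.inr (Equiv.swap_apply_left l u)⟩

end Star

section BigF

lemma FCC_eq_sum_sup_edge : FCC = (starT ⊕g starT) ⊔ edge (.inl 0) (.inr 0) := by
  rw [FCC, disjUnionG_eq_sum, edge]

lemma FCL_eq_sum_sup_edge : FCL = (starT ⊕g starT) ⊔ edge (.inl 0) (.inr 1) := by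
  rw [FCL, disjUnionG_eq_sum, edge]

lemma FLL_eq_sum_sup_edge : FLL = (starT ⊕g starT) ⊔ edge (.inl 1) (.inr 1) := by
  rw [FLL, disjUnionG_eq_sum, edge]

lemma bigF_eq_sum : bigF = (Ftri ⊕g FCC) ⊕g (FCL ⊕g FLL) := by
  simp only [bigF, disjUnionG_eq_sum]

lemma connected_starT : starT.Connected := connected_starGraph 0

lemma connected_FCC : FCC.Connected :=
  FCC_eq_sum_sup_edge ▸ connected_starT.sum_sup_edge connected_starT

lemma connected_FCL : FCL.Connected :=
  FCL_eq_sum_sup_edge ▸ connected_starT.sum_sup_edge connected_starT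

lemma connected_FLL : FLL.Connected :=
  FLL_eq_sum_sup_edge ▸ connected_starT.sum_sup_edge connected_starT

lemma isComponent_Ftri_bigF : IsComponent Ftri bigF :=
  bigF_eq_sum ▸ (isComponent_self connected_top).sum_inl.sum_inl

lemma isComponent_FCC_bigF : IsComponent FCC bigF :=
  bigF_eq_sum ▸ (isComponent_self connected_FCC).sum_inr.sum_inl

lemma isComponent_FCL_bigF : IsComponent FCL bigF :=
  bigF_eq_sum ▸ (isComponent_self connected_FCL).sum_inl.sum_inr

lemma isComponent_FLL_bigF : IsComponent FLL bigF :=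
  bigF_eq_sum ▸ (isComponent_self connected_FLL).sum_inr.sum_inr

lemma free_Ftri_starT : Ftri.Free starT :=
  cliqueFree_iff_top_free.mp ((isAcyclic_starGraph 0).cliqueFree (by simp))

lemma free_starT (A : SimpleGraph (Fin 8 ⊕ Fin 8)) : A.Free starT :=
  free_of_card_lt (by simp)

lemma exists_component_contains_starT_sup_edge (u v : Fin 8) (huv : u ≠ v)
    (hadj : ¬starT.Adj u v) :
    ∃ c : bigF.ConnectedComponent, ¬Contains starT (bigF.induce c.supp) ∧
      Contains (starT ⊔ edge u v) (bigF.induce c.supp) :=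
  isComponent_Ftri_bigF.exists_contains free_Ftri_starT
    (top_isContained_starGraph_sup_edge huv hadj)

-- Automorphisms of the star reduce this to `u, v ∈ {0, 1}`; exchanging the two stars turns the
-- leaf-centre case into the centre-leaf case.
lemma exists_component_contains_sum_starT_sup_edge (u v : Fin 8) :
    ∃ c : bigF.ConnectedComponent, ¬Contains starT (bigF.induce c.supp) ∧
      Contains (disjUnionG starT starT ⊔ edge (.inl u) (.inr v)) (bigF.induce c.supp) := by
  rw [disjUnionG_eq_sum]
  obtain ⟨σ, hσ⟩ := exists_iso_starGraph_apply_eq (Fin.zero_ne_one (n := 6)).symm u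
  obtain ⟨τ, hτ⟩ := exists_iso_starGraph_apply_eq (Fin.zero_ne_one (n := 6)).symm v
  have hmap (x y : Fin 8) : (starT ⊕g starT) ⊔ edge (.inl x) (.inr y) ⊑
      (starT ⊕g starT) ⊔ edge (.inl (σ x)) (.inr (τ y)) :=
    sup_edge_isContained (Iso.sumCongr σ τ).toCopy _ _
  have hcomm : (starT ⊕g starT) ⊔ edge (.inl 0) (.inr 1) ⊑
      (starT ⊕g starT) ⊔ edge (.inl 1) (.inr 0) := by
    rw [edge_comm (Sum.inl 1)]
    exact sup_edge_isContained Iso.sumComm.toCopy _ _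
  obtain rfl | rfl := hσ <;> obtain rfl | rfl := hτ
  · exact isComponent_FCC_bigF.exists_contains (free_starT _) (FCC_eq_sum_sup_edge ▸ hmap 0 0)
  · exact isComponent_FCL_bigF.exists_contains (free_starT _) (FCL_eq_sum_sup_edge ▸ hmap 0 1)
  · exact isComponent_FCL_bigF.exists_contains (free_starT _)
      (FCL_eq_sum_sup_edge ▸ hcomm.trans (hmap 1 0))
  · exact isComponent_FLL_bigF.exists_contains (free_starT _) (FLL_eq_sum_sup_edge ▸ hmap 1 1)

lemma card_mem_Icc_of_satSingle_bigF {V : Type*} {H : SimpleGraph V}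
    (hH : ∀ u v, H.Reachable u v → u ≠ v → H.Adj u v) {k : ℕ} (hk : k ≠ 0)
    (hsat : SatSingle bigF (unionCopies H k starT)) : ENat.card V ∈ Set.Icc 48 54 := by
  have : NeZero k := ⟨hk⟩
  have hsupp {A : SimpleGraph (Fin 8 ⊕ Fin 8)} (hA : A.Connected) (c : A.ConnectedComponent) :
      16 ≤ c.supp.encard := by
    simp [supp_eq_univ_of_preconnected hA.preconnected]
  have hD : ∀ c : (FCC ⊕g (FCL ⊕g FLL)).ConnectedComponent,
      ((2 : ℕ) : ℕ∞) + ENat.card (Fin 8) < c.supp.encard := fun c =>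
    lt_of_lt_of_le (by norm_num)
      (le_encard_supp_sum (hsupp connected_FCC)
        (le_encard_supp_sum (hsupp connected_FCL) (hsupp connected_FLL)) c)
  have hcomp : ENat.card (FCC ⊕g (FCL ⊕g FLL)).ConnectedComponent ≤ 3 := by
    grw [card_connectedComponent_sum_le, card_connectedComponent_sum_le,
      card_connectedComponent_le_one connected_FCC.preconnected,
      card_connectedComponent_le_one connected_FCL.preconnected,
      card_connectedComponent_le_one connected_FLL.preconnected]
    norm_num
  have hT : starT ≠ ⊤ := ne_top_iff_exists_not_adj.mpr ⟨1, 2, by decide, by simp [starT]⟩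
  rw [bigF_eq_sum, unionCopies_eq_sum] at hsat
  obtain ⟨hlow, hupp⟩ := card_mem_Icc_of_satSingle le_rfl hD hH hT (hsat.congr Iso.sumAssoc)
  grw [hcomp] at hupp
  exact ⟨by simpa using hlow, hupp.trans (by norm_num [ENat.card_sum])⟩

end BigF

theorem stmt14_general :
    (∀ u v : Fin 8, u ≠ v → ¬ starT.Adj u v →
      ∃ c : bigF.ConnectedComponent, ¬ Contains starT (SimpleGraph.induce c.supp bigF) ∧
        Contains (starT ⊔ SimpleGraph.fromEdgeSet {s(u, v)})
          (SimpleGraph.induce c.supp bigF)) ∧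
    (∀ u v : Fin 8,
      ∃ c : bigF.ConnectedComponent, ¬ Contains starT (SimpleGraph.induce c.supp bigF) ∧
        Contains (disjUnionG starT starT ⊔
            SimpleGraph.fromEdgeSet {s((Sum.inl u : Fin 8 ⊕ Fin 8), (Sum.inr v : Fin 8 ⊕ Fin 8))})
          (SimpleGraph.induce c.supp bigF)) ∧
    (∀ (V : Type*) (H : SimpleGraph V),
      (∀ u v : V, H.Reachable u v → u ≠ v → H.Adj u v) →
      ∀ k : ℕ, k ≠ 0 → SatSingle bigF (unionCopies H k starT) →
      ENat.card V ∈ Set.Icc 48 54) :=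
  ⟨exists_component_contains_starT_sup_edge, exists_component_contains_sum_starT_sup_edge,
    fun _ _ hH _ hk hsat => card_mem_Icc_of_satSingle_bigF hH hk hsat⟩

/-- `F` and `T` as above satisfy the hypotheses of the key lemma, yet no `F`-saturated blueprint
`(H,T)` in which `H` is a disjoint union of complete graphs has `|V(H)| ≡ 7 (mod 8)`. -/
theorem stmt14 :
    -- (i) every T+e contains a component of F not contained in T
    (∀ u v : Fin 8, u ≠ v → ¬ starT.Adj u v →
      ∃ c : bigF.ConnectedComponent, ¬ Contains starT (SimpleGraph.induce c.supp bigF) ∧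
        Contains (starT ⊔ SimpleGraph.fromEdgeSet {s(u, v)})
          (SimpleGraph.induce c.supp bigF)) ∧
    -- (i) every 2T+e contains a component of F not contained in T
    (∀ u v : Fin 8,
      ∃ c : bigF.ConnectedComponent, ¬ Contains starT (SimpleGraph.induce c.supp bigF) ∧
        Contains (disjUnionG starT starT ⊔
            SimpleGraph.fromEdgeSet {s((Sum.inl u : Fin 8 ⊕ Fin 8), (Sum.inr v : Fin 8 ⊕ Fin 8))})
          (SimpleGraph.induce c.supp bigF)) ∧
    -- (ii)
    (∀ (nH : ℕ) (H : SimpleGraph (Fin nH)),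
      (∀ u v : Fin nH, H.Reachable u v → u ≠ v → H.Adj u v) →
      (∃ K : ℕ, ∀ k : ℕ, K ≤ k → SatSingle bigF (unionCopies H k starT)) →
      nH % 8 ≠ 7) := by
  obtain ⟨hT, h2T, hcard⟩ := stmt14_general
  refine ⟨hT, h2T, fun nH H hH ⟨K, hK⟩ => ?_⟩
  have hmem := hcard (Fin nH) H hH (K + 1) K.succ_ne_zero (hK _ K.le_succ)
  simp only [ENat.card_eq_coe_fintype_card, Fintype.card_fin, Set.mem_Icc] at hmem
  norm_cast at hmem
  lia
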